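/- arXiv:alg-geom/9506002 — 2 statements merged into one kernel-verified Lean document; each statement's English description precedes it below -/
import Mathlib

section
/- Let f : ℝ² → ℝ be a real polynomial function in two variables with only finitely many critical points, and suppose the tangency polynomial T(x,y) = x·f_y(x,y) − y·f_x(x,y) is not identically zero. Then there exists R₀ > 0 such that for every connected component γ of the set {(x,y) : T(x,y) = 0 and ‖(x,y)‖ > R₀} (an 'end' of the curve of tangencies): γ is unbounded, the restriction of f to γ is injective, and there exists c ∈ ℝ ∪ {−∞, +∞} such that f(x_n, y_n) → c for every sequence of points (x_n, y_n) ∈ γ with ‖(x_n, y_n)‖ → ∞. -/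
open MvPolynomial Filter

/-- Evaluation of a polynomial in two variables at the point `(x, y)`. -/
noncomputable def evalP (f : MvPolynomial (Fin 2) ℝ) (x y : ℝ) : ℝ :=
  MvPolynomial.eval ![x, y] f

/-- `p` is a critical point of `f`: both partial derivatives vanish at `p`. -/
def IsCriticalPt (f : MvPolynomial (Fin 2) ℝ) (p : ℝ × ℝ) : Prop :=
  evalP (pderiv 0 f) p.1 p.2 = 0 ∧ evalP (pderiv 1 f) p.1 p.2 = 0

/-- The Euclidean norm on `ℝ²`. -/
noncomputable def enorm2 (p : ℝ × ℝ) : ℝ := Real.sqrt (p.1 ^ 2 + p.2 ^ 2)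

/-- The tangency polynomial `T = x·f_y − y·f_x` whose zero set is the curve of
tangencies of the level sets of `f` with the circles centered at the origin. -/
noncomputable def tangencyPoly (f : MvPolynomial (Fin 2) ℝ) : MvPolynomial (Fin 2) ℝ :=
  X 0 * pderiv 1 f - X 1 * pderiv 0 f

/-- The part of the curve of tangencies of `f` lying outside the closed disk of
radius `R` centered at the origin. -/
noncomputable def tangencyFar (f : MvPolynomial (Fin 2) ℝ) (R : ℝ) : Set (ℝ × ℝ) :=
  {q : ℝ × ℝ | evalP (tangencyPoly f) q.1 q.2 = 0 ∧ R < enorm2 q}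


/-- Clearing denominators of a polynomial over the fraction field. -/
lemma clear_denoms (g : Polynomial (FractionRing (Polynomial ℝ))) :
    ∃ d : Polynomial ℝ, d ≠ 0 ∧ ∃ G : Polynomial (Polynomial ℝ),
      G.map (algebraMap (Polynomial ℝ) (FractionRing (Polynomial ℝ))) =
        Polynomial.C (algebraMap (Polynomial ℝ) (FractionRing (Polynomial ℝ)) d) * g := by
  obtain ⟨b, hb₁, hb₂⟩ := IsLocalization.integerNormalization_spec
    (nonZeroDivisors (Polynomial ℝ)) g
  refine ⟨b, nonZeroDivisors.ne_zero hb₁, _, hb₂.trans ?_⟩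
  rw [← Polynomial.smul_eq_C_mul, algebraMap_smul]

/-- Reduced version of a bivariate polynomial, viewed as a family over the first variable. -/
lemma exists_reduced (P : Polynomial (Polynomial ℝ)) (hP : P ≠ 0) :
    ∃ (Q : Polynomial (Polynomial ℝ)) (d : Polynomial ℝ), d ≠ 0 ∧ ∀ r : ℝ, d.eval r ≠ 0 →
      ∀ t : ℝ, (P.evalEval r t = 0 ↔ Q.evalEval r t = 0) ∧
        (Q.evalEval r t = 0 → (Polynomial.derivative Q).evalEval r t ≠ 0) := by
  classical
  set K := FractionRing (Polynomial ℝ)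
  set φ := algebraMap (Polynomial ℝ) K with hφ
  have hinj : Function.Injective φ := IsFractionRing.injective _ _
  have hminj : Function.Injective (Polynomial.map φ) := Polynomial.map_injective _ hinj
  set p : Polynomial K := P.map φ with hp
  have hp0 : p ≠ 0 := by
    rw [hp]; exact (Polynomial.map_ne_zero_iff hinj).2 hP
  set q := UniqueFactorizationMonoid.radical p with hq
  have hsq : Squarefree q := UniqueFactorizationMonoid.squarefree_radical
  have : CharZero K := by
    exact charZero_of_injective_algebraMap hinj
  have hsep : q.Separable := PerfectField.separable_iff_squarefree.2 hsq
  obtain ⟨a, b, hab⟩ := hsep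
  obtain ⟨u, hu⟩ : q ∣ p := UniqueFactorizationMonoid.radical_dvd_self
  obtain ⟨n, v, hv⟩ := UniqueFactorizationMonoid.exists_dvd_radical_self_pow hp0
  obtain ⟨d0, hd0, Q, hQ⟩ := clear_denoms q
  obtain ⟨du, hdu, U, hU⟩ := clear_denoms u
  obtain ⟨dv, hdv, V, hV⟩ := clear_denoms v
  obtain ⟨da, hda, A, hA⟩ := clear_denoms a
  obtain ⟨db, hdb, B, hB⟩ := clear_denoms b
  have e1 : Q * U = Polynomial.C (d0 * du) * P := by
    apply hminj
    simp only [Polynomial.map_mul, Polynomial.map_C, map_mul]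
    rw [hQ, hU, ← hp, hu]; ring
  have e2 : Polynomial.C (d0 ^ n) * P * V = Polynomial.C dv * Q ^ n := by
    apply hminj
    simp only [Polynomial.map_mul, Polynomial.map_C, Polynomial.map_pow, map_pow]
    rw [hQ, hV, ← hp, mul_pow]
    rw [← hq] at hv
    rw [hv]; ring
  have e3 : A * Polynomial.C db * Q + B * Polynomial.C da * Polynomial.derivative Q =
      Polynomial.C (da * db * d0) := by
    apply hminj
    simp only [Polynomial.map_mul, Polynomial.map_C, map_mul, Polynomial.map_add,
      ← Polynomial.derivative_map]
    rw [hQ, hA, hB]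
    simp only [Polynomial.derivative_C_mul]
    linear_combination (Polynomial.C (φ da) * Polynomial.C (φ db) * Polynomial.C (φ d0)) * hab
  refine ⟨Q, d0 * du * dv * da * db, by simp [hd0, hdu, hdv, hda, hdb], fun r hr t => ?_⟩
  simp only [Polynomial.eval_mul, mul_ne_zero_iff] at hr
  obtain ⟨⟨⟨⟨h0, h1⟩, h2⟩, h3⟩, h4⟩ := hr
  replace e1 := congrArg (Polynomial.evalEval r t) e1
  replace e2 := congrArg (Polynomial.evalEval r t) e2
  replace e3 := congrArg (Polynomial.evalEval r t) e3
  simp only [Polynomial.evalEval_mul, Polynomial.evalEval_add, Polynomial.evalEval_pow,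
    Polynomial.evalEval_C, Polynomial.eval_mul, Polynomial.eval_pow] at e1 e2 e3
  refine ⟨⟨fun h => ?_, fun h => ?_⟩, fun h h' => ?_⟩
  · rw [h] at e2
    have : (Polynomial.evalEval r t Q) ^ n = 0 := by
      have : Polynomial.eval r dv * (Polynomial.evalEval r t Q) ^ n = 0 := by rw [← e2]; ring
      exact (mul_eq_zero.1 this).resolve_left h2
    exact (pow_eq_zero_iff (n := n) (by rintro rfl; simp at this)).1 this
  · rw [h, zero_mul] at e1
    exact (mul_eq_zero.1 e1.symm).resolve_left (mul_ne_zero h0 h1)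
  · rw [h, h'] at e3
    simp only [mul_zero, add_zero] at e3
    exact mul_ne_zero (mul_ne_zero h3 h4) h0 e3.symm

/-- Substituting the rational parametrization of the circles into a polynomial. -/
lemma exists_subst (T : MvPolynomial (Fin 2) ℝ) :
    ∃ (P : Polynomial (Polynomial ℝ)) (d : ℕ), ∀ r t : ℝ,
      P.evalEval r t = (1 + t ^ 2) ^ d *
        evalP T (r * (1 - t ^ 2) / (1 + t ^ 2)) (2 * r * t / (1 + t ^ 2)) := by
  induction T using MvPolynomial.induction_on with
  | C a =>
    refine ⟨Polynomial.C (Polynomial.C a), 0, fun r t => ?_⟩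
    simp [evalP]
  | add p q hp hq =>
    obtain ⟨P1, d1, h1⟩ := hp
    obtain ⟨P2, d2, h2⟩ := hq
    refine ⟨P1 * (1 + Polynomial.X ^ 2) ^ d2 + P2 * (1 + Polynomial.X ^ 2) ^ d1, d1 + d2,
      fun r t => ?_⟩
    simp only [Polynomial.evalEval_mul, Polynomial.evalEval_add, Polynomial.evalEval_pow,
      Polynomial.evalEval_one, Polynomial.evalEval_X, h1, h2]
    simp only [evalP, map_add]
    ring
  | mul_X p i hp =>
    obtain ⟨P, d, h⟩ := hp
    have hne : ∀ t : ℝ, (1 + t ^ 2) ≠ 0 := fun t => by positivity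
    fin_cases i
    · refine ⟨P * (Polynomial.C Polynomial.X * (1 - Polynomial.X ^ 2)), d + 1, fun r t => ?_⟩
      have := hne t
      simp only [Polynomial.evalEval_mul, Polynomial.evalEval_sub, Polynomial.evalEval_pow,
        Polynomial.evalEval_one, Polynomial.evalEval_X, Polynomial.evalEval_C,
        Polynomial.eval_X, h]
      simp [evalP]
      field_simp
      ring
    · refine ⟨P * (2 * Polynomial.C Polynomial.X * Polynomial.X), d + 1, fun r t => ?_⟩
      have := hne t
      have h2 : Polynomial.evalEval r t (2 : Polynomial (Polynomial ℝ)) = 2 :=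
        Polynomial.evalEval_natCast r t 2
      simp only [Polynomial.evalEval_mul,
        Polynomial.evalEval_X, Polynomial.evalEval_C, h2,
        Polynomial.eval_X, h]
      simp [evalP]
      field_simp
      ring

lemma contDiff_evalEval (Q : Polynomial (Polynomial ℝ)) :
    ContDiff ℝ 1 (fun v : ℝ × ℝ => Q.evalEval v.1 v.2) := by
  induction Q using Polynomial.induction_on' with
  | add p q hp hq => simpa only [Polynomial.evalEval_add] using hp.add hq
  | monomial n a =>
    have : (fun v : ℝ × ℝ => (Polynomial.monomial n a).evalEval v.1 v.2) =
        fun v : ℝ × ℝ => Polynomial.aeval v.1 a * v.2 ^ n := by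
      ext v
      simp [Polynomial.evalEval, Polynomial.eval_monomial, Polynomial.aeval_def,
        Polynomial.eval₂_eq_eval_map]
    rw [this]
    exact ((Polynomial.contDiff_aeval a 1).comp contDiff_fst).mul (contDiff_snd.pow n)

lemma hasDerivAt_evalEval (Q : Polynomial (Polynomial ℝ)) (r t : ℝ) :
    HasDerivAt (fun t => Q.evalEval r t) ((Polynomial.derivative Q).evalEval r t) t := by
  have := (Q.map (Polynomial.evalRingHom r)).hasDerivAt t
  rw [Polynomial.derivative_map] at this
  have h : ∀ (G : Polynomial (Polynomial ℝ)) (t : ℝ),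
      (G.map (Polynomial.evalRingHom r)).eval t = G.evalEval r t := fun G t => by
    rw [Polynomial.map_evalRingHom_eval]
  simpa only [h] using this

lemma enorm2_sq (q : ℝ × ℝ) : enorm2 q ^ 2 = q.1 ^ 2 + q.2 ^ 2 := by
  unfold enorm2; exact Real.sq_sqrt (by positivity)

lemma enorm2_nonneg (q : ℝ × ℝ) : 0 ≤ enorm2 q := Real.sqrt_nonneg _

lemma continuous_enorm2 : Continuous enorm2 := by
  unfold enorm2; fun_prop

lemma contDiff_evalP (T : MvPolynomial (Fin 2) ℝ) :
    Continuous (fun q : ℝ × ℝ => evalP T q.1 q.2) := by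
  unfold evalP
  exact (MvPolynomial.continuous_eval T).comp (by fun_prop)

/-- The rational parametrization of the circle of radius `r`. -/
noncomputable def circ (r t : ℝ) : ℝ × ℝ :=
  (r * (1 - t ^ 2) / (1 + t ^ 2), 2 * r * t / (1 + t ^ 2))

lemma enorm2_circ (r t : ℝ) (hr : 0 ≤ r) : enorm2 (circ r t) = r := by
  have h : (1 + t ^ 2) ≠ 0 := by positivity
  have : enorm2 (circ r t) ^ 2 = r ^ 2 := by
    rw [enorm2_sq, circ]
    field_simp
    ring
  exact (pow_left_inj₀ (enorm2_nonneg _) hr two_ne_zero).1 this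

lemma circ_recover (q : ℝ × ℝ) (h : 0 < enorm2 q + q.1) :
    circ (enorm2 q) (q.2 / (enorm2 q + q.1)) = q := by
  obtain ⟨x, y⟩ := q
  have h2 := enorm2_sq (x, y)
  have h0 := enorm2_nonneg (x, y)
  set r := enorm2 (x, y)
  simp only at h h2 ⊢
  have hr : 0 < r := by
    rcases h0.lt_or_eq with h' | h'
    · exact h'
    · rw [← h'] at h2 h
      nlinarith [sq_nonneg y]
  have hne : r + x ≠ 0 := h.ne'
  have e1 : 1 + (y / (r + x)) ^ 2 = 2 * r / (r + x) := by
    field_simp; linear_combination -h2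
  have e2 : 1 - (y / (r + x)) ^ 2 = 2 * x / (r + x) := by
    field_simp; linear_combination h2
  unfold circ
  rw [e1, e2]
  ext
  · simp only; field_simp
  · simp only; field_simp

/-- Near `p`, the zero set of `T` is a differentiable graph over the radius. -/
def LocSec (T : MvPolynomial (Fin 2) ℝ) (p : ℝ × ℝ) : Prop :=
  ∃ s : ℝ → ℝ × ℝ, DifferentiableAt ℝ s (enorm2 p) ∧ s (enorm2 p) = p ∧
    (∀ᶠ r in nhds (enorm2 p), evalP T (s r).1 (s r).2 = 0 ∧ enorm2 (s r) = r) ∧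
    ∀ᶠ q in nhds p, evalP T q.1 q.2 = 0 → s (enorm2 q) = q

lemma locSec_half (T : MvPolynomial (Fin 2) ℝ) (hT : T ≠ 0) :
    ∃ R : ℝ, 0 < R ∧ ∀ p : ℝ × ℝ, R < enorm2 p → evalP T p.1 p.2 = 0 → 0 < enorm2 p + p.1 →
      LocSec T p := by
  obtain ⟨P, k, hP⟩ := exists_subst T
  replace hP : ∀ r t, P.evalEval r t = (1 + t ^ 2) ^ k * evalP T (circ r t).1 (circ r t).2 := hP
  have hP0 : P ≠ 0 := by
    rintro rfl
    apply hT
    refine MvPolynomial.funext_set (fun _ : Fin 2 => Set.Ioi (0 : ℝ))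
      (fun _ => Set.Ioi_infinite 0) (fun v hv => ?_)
    have hv0 : 0 < v 0 := hv 0 trivial
    have hvv : v = ![v 0, v 1] := by ext i; fin_cases i <;> rfl
    have h := hP (enorm2 (v 0, v 1)) (v 1 / (enorm2 (v 0, v 1) + v 0))
    have hc := circ_recover (v 0, v 1) (add_pos_of_nonneg_of_pos (enorm2_nonneg _) hv0)
    simp only at hc
    rw [hc, Polynomial.evalEval_zero] at h
    rw [map_zero, hvv]
    exact (mul_eq_zero.1 h.symm).resolve_left (by positivity)
  obtain ⟨Q, d, hd, hQ⟩ := exists_reduced P hP0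
  obtain ⟨R, hR⟩ : ∃ R : ℝ, ∀ r, R < r → d.eval r ≠ 0 := by
    obtain ⟨R, hR⟩ := d.rootSet_finite ℝ |>.bddAbove
    refine ⟨R, fun r hr h => ?_⟩
    have := hR ((Polynomial.mem_rootSet_of_ne hd).2 (by simpa using h))
    linarith
  refine ⟨max R 1, by positivity, fun p hp hTp hpos => ?_⟩
  have hpR : R < enorm2 p := lt_of_le_of_lt (le_max_left _ _) hp
  have hp1 : 1 < enorm2 p := lt_of_le_of_lt (le_max_right _ _) hp
  -- zero sets agree
  have key : ∀ r t, R < r → (Q.evalEval r t = 0 ↔ evalP T (circ r t).1 (circ r t).2 = 0) := by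
    intro r t hr
    rw [← (hQ r (hR r hr) t).1, hP, mul_eq_zero, or_iff_right]
    positivity
  set r0 := enorm2 p with hr0
  set t0 := p.2 / (r0 + p.1) with ht0
  have hct : circ r0 t0 = p := circ_recover p hpos
  set F : ℝ × ℝ → ℝ := fun v => Q.evalEval v.1 v.2 with hF
  have hF0 : F (r0, t0) = 0 := (key r0 t0 hpR).2 (by rw [hct]; exact hTp)
  have dfu : HasStrictFDerivAt F (fderiv ℝ F (r0, t0)) (r0, t0) :=
    (contDiff_evalEval Q).contDiffAt.hasStrictFDerivAt (by norm_num)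
  have hpar : (fderiv ℝ F (r0, t0) ∘L .inr ℝ ℝ ℝ) 1 =
      (Polynomial.derivative Q).evalEval r0 t0 := by
    have h1 : HasDerivAt (fun t : ℝ => (r0, t)) ((0 : ℝ), (1 : ℝ)) t0 :=
      (hasDerivAt_const t0 r0).prodMk (hasDerivAt_id t0)
    have h2 := dfu.hasFDerivAt.comp_hasDerivAt t0 h1
    have h3 := hasDerivAt_evalEval Q r0 t0
    simpa using h2.unique h3
  have hne := (hQ r0 (hR r0 hpR) t0).2 hF0
  have inv : (fderiv ℝ F (r0, t0) ∘L .inr ℝ ℝ ℝ).IsInvertible := by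
    refine ⟨ContinuousLinearEquiv.unitsEquivAut ℝ (Units.mk0 _ hne), ?_⟩
    ext
    rw [hpar]
    simp
  set ψ := dfu.implicitFunctionOfProdDomain inv with hψ
  have a1 := dfu.eventually_apply_eq_iff_implicitFunctionOfProdDomain inv
  have a2 := dfu.hasStrictFDerivAt_implicitFunctionOfProdDomain inv
  have a3 := dfu.eventually_apply_implicitFunctionOfProdDomain inv
  rw [← hψ] at a1 a2 a3
  have hψ0 : ψ r0 = t0 := a1.self_of_nhds.1 rfl
  rw [hF0] at a1 a3
  have dψ : DifferentiableAt ℝ ψ r0 := a2.hasFDerivAt.differentiableAt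
  refine ⟨fun r => circ r (ψ r), ?_, ?_, ?_, ?_⟩
  · unfold circ
    have : ∀ r, 1 + ψ r ^ 2 ≠ 0 := fun r => by positivity
    refine DifferentiableAt.prodMk ?_ ?_
    · exact DifferentiableAt.div (by fun_prop) (by fun_prop) (this _)
    · exact DifferentiableAt.div (by fun_prop) (by fun_prop) (this _)
  · show circ r0 (ψ r0) = p
    rw [hψ0, hct]
  · filter_upwards [a3, lt_mem_nhds hpR, lt_mem_nhds hp1] with r h1 h2 h3
    exact ⟨(key r (ψ r) h2).1 h1, enorm2_circ _ _ (by linarith)⟩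
  · have hcont : ContinuousAt (fun q : ℝ × ℝ => (enorm2 q, q.2 / (enorm2 q + q.1))) p := by
      have := continuous_enorm2
      refine ContinuousAt.prodMk this.continuousAt ?_
      exact ContinuousAt.div (by fun_prop) (by fun_prop) hpos.ne'
    have b1 := hcont.eventually a1
    have b2 : ∀ᶠ q in nhds p, R < enorm2 q :=
      continuous_enorm2.continuousAt.eventually (lt_mem_nhds hpR)
    have b3 : ∀ᶠ q : ℝ × ℝ in nhds p, 0 < enorm2 q + q.1 :=
      (continuous_enorm2.add continuous_fst).continuousAt.eventually (lt_mem_nhds hpos)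
    filter_upwards [b1, b2, b3] with q c1 c2 c3 hq
    have hc := circ_recover q c3
    have : F (enorm2 q, q.2 / (enorm2 q + q.1)) = 0 := (key _ _ c2).2 (by rw [hc]; exact hq)
    have e := c1.1 this
    show circ (enorm2 q) (ψ (enorm2 q)) = q
    rw [e, hc]

lemma enorm2_refl (q : ℝ × ℝ) : enorm2 (-q.1, q.2) = enorm2 q := by simp [enorm2]

lemma locSec_all (T : MvPolynomial (Fin 2) ℝ) (hT : T ≠ 0) :
    ∃ R : ℝ, 0 < R ∧ ∀ p : ℝ × ℝ, R < enorm2 p → evalP T p.1 p.2 = 0 → LocSec T p := by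
  set T' : MvPolynomial (Fin 2) ℝ := MvPolynomial.aeval ![-X 0, X 1] T with hT'
  have hev : ∀ x y, evalP T' x y = evalP T (-x) y := by
    intro x y
    have : ((MvPolynomial.aeval ![x, y]).comp
        (MvPolynomial.aeval ![-X 0, X 1] : MvPolynomial (Fin 2) ℝ →ₐ[ℝ] MvPolynomial (Fin 2) ℝ))
        = (MvPolynomial.aeval ![-x, y] : MvPolynomial (Fin 2) ℝ →ₐ[ℝ] ℝ) := by
      ext i; fin_cases i <;> simp
    have := DFunLike.congr_fun this T
    exact this
  have hT'0 : T' ≠ 0 := by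
    intro h
    apply hT
    refine MvPolynomial.funext fun v => ?_
    have hvv : v = ![v 0, v 1] := by ext i; fin_cases i <;> rfl
    have := hev (- v 0) (v 1)
    rw [h, neg_neg] at this
    rw [hvv]
    simpa [evalP] using this.symm
  obtain ⟨R1, hR1, h1⟩ := locSec_half T hT
  obtain ⟨R2, hR2, h2⟩ := locSec_half T' hT'0
  refine ⟨max R1 R2, by positivity, fun p hp hTp => ?_⟩
  have hpR1 : R1 < enorm2 p := lt_of_le_of_lt (le_max_left _ _) hp
  have hpR2 : R2 < enorm2 p := lt_of_le_of_lt (le_max_right _ _) hp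
  by_cases hpos : 0 < enorm2 p + p.1
  · exact h1 p hpR1 hTp hpos
  obtain ⟨s, s1, s2, s3, s4⟩ := h2 (-p.1, p.2) (by rwa [enorm2_refl])
    (by rw [hev]; simpa using hTp) (by rw [enorm2_refl]; simp only; linarith)
  rw [enorm2_refl] at s1 s2 s3
  refine ⟨fun r => (-(s r).1, (s r).2), ?_, ?_, ?_, ?_⟩
  · exact s1.fst.neg.prodMk s1.snd
  · simp [s2]
  · filter_upwards [s3] with r hr
    rw [hev] at hr
    rw [enorm2_refl]
    exact hr
  · have hc : ContinuousAt (fun q : ℝ × ℝ => (-q.1, q.2)) p := by fun_prop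
    filter_upwards [hc.eventually s4] with q hq h
    rw [hev, enorm2_refl] at hq
    have := hq (by simpa using h)
    simp [this]

lemma exists_section (T : MvPolynomial (Fin 2) ℝ) (R : ℝ)
    (hloc : ∀ p : ℝ × ℝ, R < enorm2 p → evalP T p.1 p.2 = 0 → LocSec T p)
    (p : ℝ × ℝ) (hp : evalP T p.1 p.2 = 0 ∧ R < enorm2 p) :
    ∃ σ : ℝ → ℝ × ℝ, ContinuousOn σ (Set.Ioi R) ∧
      (∀ r, R < r → (evalP T (σ r).1 (σ r).2 = 0 ∧ enorm2 (σ r) = r)) ∧ σ (enorm2 p) = p := by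
  set Z : Set (ℝ × ℝ) := {q | evalP T q.1 q.2 = 0 ∧ R < enorm2 q} with hZ
  let ρ : Z → Set.Ioi R := fun q => ⟨enorm2 q.1, q.2.2⟩
  have hρ : Continuous ρ := (continuous_enorm2.comp continuous_subtype_val).subtype_mk _
  -- openness
  have hopen : IsOpenMap ρ := by
    rw [isOpenMap_iff_nhds_le]
    rintro ⟨q, hq⟩ U hU
    obtain ⟨s, s1, s2, s3, s4⟩ := hloc q hq.2 hq.1
    rw [Filter.mem_map] at hU
    obtain ⟨V, hV, hVU⟩ := mem_nhds_subtype _ _ _ |>.1 hU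
    have hV' : ∀ᶠ r in nhds (enorm2 q), s r ∈ V := s1.continuousAt.eventually (by rw [s2]; exact hV)
    rw [mem_nhds_subtype]
    refine ⟨_, s3.and hV', ?_⟩
    rintro ⟨r, hr⟩ ⟨⟨h1, h2⟩, h3⟩
    have hr' : R < r := hr
    have hm : s r ∈ Z := ⟨h1, by rw [h2]; exact hr'⟩
    have : ρ ⟨s r, hm⟩ ∈ U := hVU h3
    have e : ρ ⟨s r, hm⟩ = ⟨r, hr⟩ := Subtype.ext h2
    rwa [e] at this
  have hlh : IsLocalHomeomorph ρ := by
    rw [isLocalHomeomorph_iff_isOpenEmbedding_restrict]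
    rintro ⟨q, hq⟩
    obtain ⟨s, s1, s2, s3, s4⟩ := hloc q hq.2 hq.1
    obtain ⟨U, hU, hUo, hqU⟩ := mem_nhds_iff.1 s4
    have hUo' : IsOpen (Subtype.val ⁻¹' U : Set Z) := hUo.preimage continuous_subtype_val
    refine ⟨Subtype.val ⁻¹' U, hUo'.mem_nhds hqU, ?_⟩
    refine .of_continuous_injective_isOpenMap (hρ.comp continuous_subtype_val) ?_
      (hopen.domRestrict hUo')
    rintro ⟨⟨a, ha⟩, haU⟩ ⟨⟨b, hb⟩, hbU⟩ hab
    have hab' : enorm2 a = enorm2 b := congrArg Subtype.val hab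
    have ea : s (enorm2 a) = a := hU haU ha.1
    have eb : s (enorm2 b) = b := hU hbU hb.1
    have : a = b := by rw [← ea, ← eb, hab']
    subst this; rfl
  have hproper : IsProperMap ρ := by
    rw [isProperMap_iff_isCompact_preimage]
    refine ⟨hρ, fun K hK => ?_⟩
    rw [Subtype.isCompact_iff]
    have hK' : IsCompact (Subtype.val '' K) := hK.image continuous_subtype_val
    have himg : Subtype.val '' (ρ ⁻¹' K) =
        {q : ℝ × ℝ | evalP T q.1 q.2 = 0} ∩ enorm2 ⁻¹' (Subtype.val '' K) := by
      ext q
      constructor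
      · rintro ⟨⟨q, hq⟩, hqK, rfl⟩
        exact ⟨hq.1, _, hqK, rfl⟩
      · rintro ⟨h1, k, hk, hkq⟩
        have h2 : R < enorm2 q := by rw [← hkq]; exact k.2
        refine ⟨⟨q, h1, h2⟩, ?_, rfl⟩
        have : ρ ⟨q, h1, h2⟩ = k := Subtype.ext hkq.symm
        rw [Set.mem_preimage, this]; exact hk
    rw [himg]
    have hcl : IsClosed ({q : ℝ × ℝ | evalP T q.1 q.2 = 0} ∩ enorm2 ⁻¹' (Subtype.val '' K)) :=
      (isClosed_eq (contDiff_evalP T) continuous_const).inter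
        (hK'.isClosed.preimage continuous_enorm2)
    refine Metric.isCompact_of_isClosed_isBounded hcl ?_
    obtain ⟨M, hM⟩ := hK'.bddAbove
    refine (Metric.isBounded_closedBall (x := (0 : ℝ × ℝ)) (r := M)).subset ?_
    rintro q ⟨-, hq⟩
    have hqM : enorm2 q ≤ M := hM hq
    have hs := enorm2_sq q
    have h0 := enorm2_nonneg q
    rw [mem_closedBall_zero_iff, Prod.norm_def]
    refine max_le ?_ ?_
    · exact (abs_le_of_sq_le_sq (by nlinarith [sq_nonneg q.2]) h0).trans hqM
    · exact (abs_le_of_sq_le_sq (by nlinarith [sq_nonneg q.1]) h0).trans hqM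
  have hcov : IsCoveringMap ρ := by
    rw [isCoveringMap_iff_isCoveringMapOn_univ]
    refine hproper.isClosedMap.isCoveringMapOn_of_isLocalHomeomorphOn (fun x _ => ?_)
      hlh.isLocalHomeomorphOn
    refine (hproper.isCompact_preimage isCompact_singleton).finite ?_
    refine IsDiscrete.of_openPartialHomeomorph ρ subset_rfl fun e _ => ?_
    obtain ⟨φ, h1, h2⟩ := hlh e
    exact ⟨φ, h1, h2.symm⟩
  have : ContractibleSpace (Set.Ioi R) :=
    (convex_Ioi R).contractibleSpace ⟨R + 1, by simp⟩
  have : LocallyPathConnectedSpace (Set.Ioi R) := isOpen_Ioi.locallyPathConnectedSpace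
  obtain ⟨F, ⟨hF1, hF2⟩, -⟩ := hcov.existsUnique_continuousMap_lifts (ContinuousMap.id (Set.Ioi R))
    ⟨enorm2 p, hp.2⟩ ⟨p, hp⟩ rfl
  have hF3 : ∀ r, ρ (F r) = r := fun r => congrFun hF2 r
  classical
  refine ⟨fun r => if h : R < r then (F ⟨r, h⟩).1 else 0, ?_, ?_, ?_⟩
  · rw [continuousOn_iff_continuous_domRestrict]
    have : (Set.Ioi R).domRestrict (fun r => if h : R < r then (F ⟨r, h⟩).1 else 0) =
        fun r => (F r).1 := by
      ext1 ⟨r, hr⟩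
      have hr' : R < r := hr
      simp [Set.domRestrict, hr']
    rw [this]
    exact continuous_subtype_val.comp F.continuous
  · intro r hr
    simp only [hr, dite_true]
    exact ⟨(F ⟨r, hr⟩).2.1, congrArg Subtype.val (hF3 ⟨r, hr⟩)⟩
  · simp only [hp.2, dite_true, hF1]

lemma component_eq (T : MvPolynomial (Fin 2) ℝ) (R : ℝ)
    (hloc : ∀ p : ℝ × ℝ, R < enorm2 p → evalP T p.1 p.2 = 0 → LocSec T p)
    (p : ℝ × ℝ) (hp : evalP T p.1 p.2 = 0 ∧ R < enorm2 p) (σ : ℝ → ℝ × ℝ)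
    (h1 : ContinuousOn σ (Set.Ioi R))
    (h2 : ∀ r, R < r → (evalP T (σ r).1 (σ r).2 = 0 ∧ enorm2 (σ r) = r))
    (h3 : σ (enorm2 p) = p) :
    connectedComponentIn {q : ℝ × ℝ | evalP T q.1 q.2 = 0 ∧ R < enorm2 q} p =
      σ '' Set.Ioi R := by
  set Z : Set (ℝ × ℝ) := {q | evalP T q.1 q.2 = 0 ∧ R < enorm2 q} with hZ
  apply Set.Subset.antisymm
  · set C := connectedComponentIn Z p with hC
    have hCZ : C ⊆ Z := connectedComponentIn_subset _ _
    have hpc : IsPreconnected C := isPreconnected_connectedComponentIn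
    have : PreconnectedSpace C := Subtype.preconnectedSpace hpc
    have hcont : Continuous (fun c : C => σ (enorm2 c.1)) := by
      have : Continuous (fun c : C => enorm2 c.1) := continuous_enorm2.comp continuous_subtype_val
      exact h1.comp_continuous this (fun c => (hCZ c.2).2)
    have hclopen : IsClopen {c : C | σ (enorm2 c.1) = c.1} := by
      refine ⟨isClosed_eq hcont continuous_subtype_val, ?_⟩
      rw [isOpen_iff_mem_nhds]
      rintro ⟨c, hc⟩ hcc
      obtain ⟨s, s1, s2, s3, s4⟩ := hloc c (hCZ hc).2 (hCZ hc).1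
      have hcc' : σ (enorm2 c) = c := hcc
      have e1 : ∀ᶠ q : C in nhds ⟨c, hc⟩, evalP T q.1.1 q.1.2 = 0 → s (enorm2 q.1) = q.1 :=
        (continuousAt_subtype_val (p := fun x => x ∈ C) (x := ⟨c, hc⟩)).eventually s4
      have ht : Tendsto (fun q : C => σ (enorm2 q.1)) (nhds ⟨c, hc⟩) (nhds c) := by
        have h := hcont.tendsto (⟨c, hc⟩ : C)
        simp only [hcc'] at h
        exact h
      have e2 : ∀ᶠ q : C in nhds ⟨c, hc⟩,
          evalP T (σ (enorm2 q.1)).1 (σ (enorm2 q.1)).2 = 0 →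
            s (enorm2 (σ (enorm2 q.1))) = σ (enorm2 q.1) :=
        ht.eventually s4
      filter_upwards [e1, e2] with q f1 f2
      have g := h2 (enorm2 q.1) (hCZ q.2).2
      have f2' := f2 g.1
      rw [g.2, f1 (hCZ q.2).1] at f2'
      exact f2'.symm
    have huniv := hclopen.eq_univ ⟨⟨p, mem_connectedComponentIn hp⟩, h3⟩
    intro c hc
    have : (⟨c, hc⟩ : C) ∈ {c : C | σ (enorm2 c.1) = c.1} := by rw [huniv]; trivial
    exact ⟨enorm2 c, (hCZ hc).2, this⟩
  · refine IsPreconnected.subset_connectedComponentIn (isPreconnected_Ioi.image σ h1)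
      ⟨_, hp.2, h3⟩ ?_
    rintro _ ⟨r, hr, rfl⟩
    exact ⟨(h2 r hr).1, by rw [(h2 r hr).2]; exact hr⟩

lemma hasDerivAt_evalP (f : MvPolynomial (Fin 2) ℝ) (x y : ℝ → ℝ) (x' y' r : ℝ)
    (hx : HasDerivAt x x' r) (hy : HasDerivAt y y' r) :
    HasDerivAt (fun r => evalP f (x r) (y r))
      (evalP (pderiv 0 f) (x r) (y r) * x' + evalP (pderiv 1 f) (x r) (y r) * y') r := by
  induction f using MvPolynomial.induction_on with
  | C a => simpa [evalP] using hasDerivAt_const r a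
  | add p q hp hq =>
    have h := hp.add hq
    refine (h.congr_deriv ?_).congr_of_eventuallyEq (Eventually.of_forall fun r => ?_)
    · simp only [evalP, map_add]; ring
    · simp [evalP]
  | mul_X p i hp =>
    fin_cases i
    · have h := hp.mul hx
      refine (h.congr_deriv ?_).congr_of_eventuallyEq (Eventually.of_forall fun r => ?_)
      · simp [evalP, Derivation.leibniz, pderiv_X]; ring
      · simp [evalP]
    · have h := hp.mul hy
      refine (h.congr_deriv ?_).congr_of_eventuallyEq (Eventually.of_forall fun r => ?_)
      · simp [evalP, Derivation.leibniz, pderiv_X]; ring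
      · simp [evalP]

/-- A continuous injective function on a half-line has a limit in the extended reals. -/
lemma exists_limit (g : ℝ → ℝ) (R : ℝ) (hc : ContinuousOn g (Set.Ioi R))
    (hi : Set.InjOn g (Set.Ioi R)) :
    ∃ c : EReal, Tendsto (fun r => ((g r : ℝ) : EReal)) atTop (nhds c) := by
  set k : ℝ → ℝ := fun u => g (R + Real.exp u) with hk
  have hmem : ∀ u, R + Real.exp u ∈ Set.Ioi R := fun u => by
    simp [Real.exp_pos]
  have hkc : Continuous k := hc.comp_continuous (by fun_prop) hmem
  have hki : Function.Injective k := fun u v h => by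
    have := hi (hmem u) (hmem v) h
    exact Real.exp_injective (by linarith)
  have hlim : ∃ c : EReal, Tendsto (fun u => ((k u : ℝ) : EReal)) atTop (nhds c) := by
    rcases hkc.strictMono_of_inj hki with h | h
    · exact ⟨_, tendsto_atTop_iSup (fun a b hab => EReal.coe_le_coe_iff.2 (h.monotone hab))⟩
    · exact ⟨_, tendsto_atTop_iInf (fun a b hab => EReal.coe_le_coe_iff.2 (h.antitone hab))⟩
  obtain ⟨c, hcl⟩ := hlim
  refine ⟨c, ?_⟩
  have h1 : Tendsto (fun r : ℝ => Real.log (r - R)) atTop atTop :=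
    Real.tendsto_log_atTop.comp (tendsto_atTop_add_const_right _ (-R) tendsto_id)
  refine (hcl.comp h1).congr' ?_
  filter_upwards [eventually_gt_atTop R] with r hr
  simp only [Function.comp, hk]
  rw [Real.exp_log (by linarith)]
  congr 2
  ring

theorem ends_of_tangency_curve
    (f : MvPolynomial (Fin 2) ℝ)
    (hfin : {p : ℝ × ℝ | IsCriticalPt f p}.Finite)
    (hT : tangencyPoly f ≠ 0) :
    ∃ R₀ : ℝ, 0 < R₀ ∧
      ∀ p ∈ tangencyFar f R₀,
        ¬ Bornology.IsBounded (connectedComponentIn (tangencyFar f R₀) p) ∧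
        Set.InjOn (fun q : ℝ × ℝ => evalP f q.1 q.2)
          (connectedComponentIn (tangencyFar f R₀) p) ∧
        ∃ c : EReal, ∀ z : ℕ → ℝ × ℝ,
          (∀ n, z n ∈ connectedComponentIn (tangencyFar f R₀) p) →
          Tendsto (fun n => enorm2 (z n)) atTop atTop →
          Tendsto (fun n => ((evalP f (z n).1 (z n).2 : ℝ) : EReal)) atTop (nhds c) := by
  obtain ⟨R₁, hR₁, hloc₁⟩ := locSec_all (tangencyPoly f) hT
  obtain ⟨R₂, hR₂⟩ := (hfin.image enorm2).bddAbove
  have hcrit : ∀ q, R₂ < enorm2 q → ¬ IsCriticalPt f q := fun q hq h => by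
    have := hR₂ (Set.mem_image_of_mem enorm2 h)
    linarith
  refine ⟨max R₁ R₂, lt_of_lt_of_le hR₁ (le_max_left _ _), ?_⟩
  have hR0 : 0 < max R₁ R₂ := lt_of_lt_of_le hR₁ (le_max_left _ _)
  have hR2 : R₂ ≤ max R₁ R₂ := le_max_right _ _
  have hloc : ∀ p : ℝ × ℝ, max R₁ R₂ < enorm2 p → evalP (tangencyPoly f) p.1 p.2 = 0 →
      LocSec (tangencyPoly f) p :=
    fun p hp => hloc₁ p (lt_of_le_of_lt (le_max_left _ _) hp)
  generalize max R₁ R₂ = R at *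
  intro p hp
  obtain ⟨σ, h1, h2, h3⟩ := exists_section (tangencyPoly f) R hloc p hp
  have hcomp : connectedComponentIn (tangencyFar f R) p = σ '' Set.Ioi R :=
    component_eq (tangencyPoly f) R hloc p hp σ h1 h2 h3
  rw [hcomp]
  have hσd : ∀ r, R < r → DifferentiableAt ℝ σ r := by
    intro r hr
    have hr2 := h2 r hr
    obtain ⟨s, s1, s2, s3, s4⟩ := hloc (σ r) (by rw [hr2.2]; exact hr) hr2.1
    rw [hr2.2] at s1
    refine s1.congr_of_eventuallyEq ?_
    have hca : ContinuousAt σ r := h1.continuousAt (Ioi_mem_nhds hr)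
    filter_upwards [hca.eventually s4, lt_mem_nhds hr] with r' e1 e2
    have := h2 r' e2
    rw [← e1 this.1, this.2]
  set g : ℝ → ℝ := fun r => evalP f (σ r).1 (σ r).2 with hg
  have hder : ∀ r, R < r → ∃ g', g' ≠ 0 ∧ HasDerivAt g g' r := by
    intro r hr
    have hd := hσd r hr
    have hx := hd.fst.hasDerivAt
    have hy := hd.snd.hasDerivAt
    set x' := deriv (fun r => (σ r).1) r
    set y' := deriv (fun r => (σ r).2) r
    refine ⟨_, ?_, hasDerivAt_evalP f _ _ x' y' r hx hy⟩
    have hsq : HasDerivAt (fun r => (σ r).1 ^ 2 + (σ r).2 ^ 2) (2 * r) r := by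
      refine (((hasDerivAt_id r).pow 2).congr_deriv (by simp)).congr_of_eventuallyEq ?_
      filter_upwards [lt_mem_nhds hr] with u hu
      have := enorm2_sq (σ u)
      rw [(h2 u hu).2] at this
      simpa using this.symm
    have hrr : (σ r).1 * x' + (σ r).2 * y' = r := by
      have := ((hx.pow 2).add (hy.pow 2)).unique hsq
      simp at this
      linarith
    have hTz := (h2 r hr).1
    have hnorm := enorm2_sq (σ r)
    rw [(h2 r hr).2] at hnorm
    have hnc := hcrit (σ r) (by rw [(h2 r hr).2]; linarith)
    intro h0
    apply hnc
    unfold IsCriticalPt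
    have hTz' : (σ r).1 * evalP (pderiv 1 f) (σ r).1 (σ r).2
        - (σ r).2 * evalP (pderiv 0 f) (σ r).1 (σ r).2 = 0 := by
      simpa [evalP, tangencyPoly] using hTz
    generalize evalP (pderiv 0 f) (σ r).1 (σ r).2 = A at *
    generalize evalP (pderiv 1 f) (σ r).1 (σ r).2 = B at *
    generalize (σ r).1 = x at *
    generalize (σ r).2 = y at *
    have hrpos : 0 < r := hR0.trans hr
    have hrad : x * A + y * B = 0 := by
      have : (x * A + y * B) * r = 0 := by
        linear_combination (-(x * A + y * B)) * hrr + (x ^ 2 + y ^ 2) * h0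
          + (y * x' - x * y') * hTz'
      exact (mul_eq_zero.1 this).resolve_right hrpos.ne'
    have hr2 : r ^ 2 ≠ 0 := by positivity
    constructor
    · have : r ^ 2 * A = 0 := by
        linear_combination A * hnorm + x * hrad - y * hTz'
      exact (mul_eq_zero.1 this).resolve_left hr2
    · have : r ^ 2 * B = 0 := by
        linear_combination B * hnorm + y * hrad + x * hTz'
      exact (mul_eq_zero.1 this).resolve_left hr2
  have hgc : ContinuousOn g (Set.Ioi R) := fun r hr => by
    obtain ⟨g', -, h⟩ := hder r hr
    exact h.continuousAt.continuousWithinAt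
  have hne : ∀ a b, R < a → a < b → g a ≠ g b := by
    intro a b ha hab heq
    choose! g' hg' using hder
    obtain ⟨c, hc, hc0⟩ := exists_hasDerivAt_eq_zero hab
      (hgc.mono fun u hu => lt_of_lt_of_le ha hu.1) heq
      (fun u hu => (hg' u (ha.trans hu.1)).2)
    exact (hg' c (ha.trans hc.1)).1 hc0
  have hinj : Set.InjOn g (Set.Ioi R) := by
    intro a ha b hb hab
    rcases lt_trichotomy a b with h | h | h
    · exact absurd hab (hne a b ha h)
    · exact h
    · exact absurd hab.symm (hne b a hb h)
  refine ⟨?_, ?_, ?_⟩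
  · intro hb
    obtain ⟨M, hM⟩ := hb.exists_norm_le
    have hmem : R < max (R + 1) (2 * M + 1) := lt_of_lt_of_le (by linarith) (le_max_left _ _)
    have hle := hM _ (Set.mem_image_of_mem σ hmem)
    have h2r := (h2 _ hmem).2
    have hbig : 2 * M + 1 ≤ max (R + 1) (2 * M + 1) := le_max_right _ _
    generalize max (R + 1) (2 * M + 1) = r at *
    have hs := enorm2_sq (σ r)
    rw [h2r] at hs
    have hM0 : 0 ≤ M := (norm_nonneg _).trans hle
    have ha : |(σ r).1| ≤ M := (norm_fst_le (σ r)).trans hle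
    have hb : |(σ r).2| ≤ M := (norm_snd_le (σ r)).trans hle
    have ha2 := sq_le_sq' (abs_le.1 ha).1 (abs_le.1 ha).2
    have hb2 := sq_le_sq' (abs_le.1 hb).1 (abs_le.1 hb).2
    nlinarith
  · rintro _ ⟨a, ha, rfl⟩ _ ⟨b, hb, rfl⟩ hab
    rw [hinj ha hb hab]
  · obtain ⟨c, hc⟩ := exists_limit g R hgc hinj
    refine ⟨c, fun z hz hzt => ?_⟩
    refine (hc.comp hzt).congr fun n => ?_
    obtain ⟨r, hr, hrz⟩ := hz n
    have : σ (enorm2 (z n)) = z n := by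
      rw [← hrz, (h2 r hr).2]
    simp only [Function.comp, hg, this]
end

section
/- Fix d ≥ 1 and identify the real polynomials in two variables of degree at most d with the finite-dimensional real vector space of their coefficient tuples, equipped with its standard topology. Call a polynomial g of degree at most d Morse-generic if (i) its degree-d homogeneous part g_d is nonzero and has no repeated real linear factors (for every (a,b) ≠ (0,0), (b·x − a·y)² does not divide g_d), and (ii) every real critical point of g is nondegenerate (the Hessian determinant g_xx·g_yy − g_xy² is nonzero there). Then the set of Morse-generic polynomials is an open and dense subset of the space of polynomials of degree at most d. -/
open MvPolynomial Filter

/-- The polynomial of degree at most `d` with coefficient tuple `v`: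
`∑_{j+k ≤ d} v_{jk} x^j y^k`.  The space of coefficient tuples
`{q : ℕ × ℕ // q.1 + q.2 ≤ d} → ℝ` is a finite-dimensional real vector space
with its standard (product) topology. -/
noncomputable def polyOf (d : ℕ) (v : {q : ℕ × ℕ // q.1 + q.2 ≤ d} → ℝ) :
    MvPolynomial (Fin 2) ℝ :=
  ∑ᶠ q : {q : ℕ × ℕ // q.1 + q.2 ≤ d}, C (v q) * X 0 ^ q.1.1 * X 1 ^ q.1.2

/-- `g` is Morse-generic (for degree `d`): its degree-`d` homogeneous part is nonzero
and has no repeated real linear factors, and all its real critical points are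
nondegenerate. -/
def MorseGeneric (d : ℕ) (g : MvPolynomial (Fin 2) ℝ) : Prop :=
  homogeneousComponent d g ≠ 0 ∧
  (∀ a b : ℝ, (a, b) ≠ ((0 : ℝ), (0 : ℝ)) →
    ¬ ((C b * X 0 - C a * X 1) ^ 2 ∣ homogeneousComponent d g)) ∧
  ∀ x y : ℝ, evalP (pderiv 0 g) x y = 0 → evalP (pderiv 1 g) x y = 0 →
    evalP (pderiv 0 (pderiv 0 g)) x y * evalP (pderiv 1 (pderiv 1 g)) x y -
      (evalP (pderiv 1 (pderiv 0 g)) x y) ^ 2 ≠ 0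


open MeasureTheory

lemma mono_fin2 (m : Fin 2 →₀ ℕ) (c : ℝ) :
    (monomial m c : MvPolynomial (Fin 2) ℝ) = C c * X 0 ^ m 0 * X 1 ^ m 1 := by
  rw [monomial_eq, Finsupp.prod_fintype _ _ (by simp)]
  simp [Fin.prod_univ_two, mul_assoc]

lemma dvd_aux (h : MvPolynomial (Fin 2) ℝ) (n : ℕ) (hh : h.IsHomogeneous n) (a b : ℝ) :
    (C b * X 0 - C a * X 1) ∣ C (a ^ n) * h - C (evalP h a b) * X 0 ^ n ∧
    (C b * X 0 - C a * X 1) ∣ C (b ^ n) * h - C (evalP h a b) * X 1 ^ n := by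
  have key : ∀ m ∈ h.support, ∃ i j : ℕ, i + j = n ∧
      monomial m (coeff m h) = C (coeff m h) * X 0 ^ i * X 1 ^ j ∧
      evalP (monomial m (coeff m h)) a b = coeff m h * a ^ i * b ^ j := by
    intro m hm
    refine ⟨m 0, m 1, ?_, mono_fin2 _ _, ?_⟩
    · have := hh (mem_support_iff.1 hm)
      rw [← this]
      simp [Finsupp.weight_apply, Finsupp.sum_fintype, Fin.sum_univ_two]
    · rw [mono_fin2]; simp [evalP]
  have e : evalP h a b = ∑ m ∈ h.support, evalP (monomial m (coeff m h)) a b := by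
    conv_lhs => rw [h.as_sum]
    simp only [evalP, map_sum]
  rw [e]
  have e2 : ∀ c : ℝ, C c * h = C c * ∑ m ∈ h.support, monomial m (coeff m h) := fun c => by
    rw [← h.as_sum]
  rw [e2, e2]
  simp only [Finset.mul_sum, map_sum, Finset.sum_mul, ← Finset.sum_sub_distrib]
  constructor
  · refine Finset.dvd_sum fun m hm => ?_
    obtain ⟨i, j, hij, h1, h2⟩ := key m hm
    rw [h2, h1, ← hij]
    have := (sub_dvd_pow_sub_pow (C b * X 0 : MvPolynomial (Fin 2) ℝ) (C a * X 1) j).mul_left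
      (- C (coeff m h) * C a ^ i * X 0 ^ i)
    convert this using 1
    simp only [map_mul, map_pow]
    ring
  · refine Finset.dvd_sum fun m hm => ?_
    obtain ⟨i, j, hij, h1, h2⟩ := key m hm
    rw [h2, h1, ← hij]
    have := (sub_dvd_pow_sub_pow (C b * X 0 : MvPolynomial (Fin 2) ℝ) (C a * X 1) i).mul_left
      (C (coeff m h) * C b ^ j * X 1 ^ j)
    convert this using 1
    simp only [map_mul, map_pow]
    ring

lemma dvd_of_C_mul {p q : MvPolynomial (Fin 2) ℝ} {c : ℝ} (hc : c ≠ 0) (h : p ∣ C c * q) :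
    p ∣ q := by
  have := h.mul_left (C c⁻¹)
  rwa [← mul_assoc, ← C_mul, inv_mul_cancel₀ hc, C_1, one_mul] at this

lemma dvd_of_root (h : MvPolynomial (Fin 2) ℝ) (n : ℕ) (hh : h.IsHomogeneous n) (a b : ℝ)
    (hab : (a, b) ≠ ((0 : ℝ), (0 : ℝ))) (h0 : evalP h a b = 0) :
    (C b * X 0 - C a * X 1) ∣ h := by
  obtain ⟨h1, h2⟩ := dvd_aux h n hh a b
  simp only [h0, C_0, zero_mul, sub_zero] at h1 h2
  by_cases ha : a = 0
  · have hb : b ≠ 0 := by rintro rfl; simp [ha] at hab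
    exact dvd_of_C_mul (pow_ne_zero n hb) h2
  · exact dvd_of_C_mul (pow_ne_zero n ha) h1

lemma homog_l (a b : ℝ) : (C b * X 0 - C a * X 1 : MvPolynomial (Fin 2) ℝ).IsHomogeneous 1 :=
  (isHomogeneous_C_mul_X b 0).sub (isHomogeneous_C_mul_X a 1)

lemma homComp_mul (l k : MvPolynomial (Fin 2) ℝ) (hl : l.IsHomogeneous 1) (n : ℕ) :
    homogeneousComponent (1 + n) (l * k) = l * homogeneousComponent n k := by
  let _ := MvPolynomial.gradedAlgebra (σ := Fin 2) (R := ℝ)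
  have := DirectSum.coe_decompose_mul_add_of_left_mem (homogeneousSubmodule (Fin 2) ℝ)
    (i := 1) (j := n) (a := l) (b := k) hl
  have e : ∀ (φ : MvPolynomial (Fin 2) ℝ) i,
    (DirectSum.decompose (homogeneousSubmodule (Fin 2) ℝ) φ i : MvPolynomial (Fin 2) ℝ)
      = homogeneousComponent i φ := fun φ i => decomposition.decompose'_apply φ i
  rwa [e, e] at this

lemma euler (h : MvPolynomial (Fin 2) ℝ) (n : ℕ) (hh : h.IsHomogeneous n) (x y : ℝ) :
    x * evalP (pderiv 0 h) x y + y * evalP (pderiv 1 h) x y = n * evalP h x y := by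
  have := congrArg (fun p => evalP p x y) hh.sum_X_mul_pderiv
  simpa [evalP, Fin.sum_univ_two] using this

lemma sq_dvd_iff (d : ℕ) (hd : 1 ≤ d) (h : MvPolynomial (Fin 2) ℝ) (hh : h.IsHomogeneous d)
    (a b : ℝ) (hab : (a, b) ≠ ((0 : ℝ), (0 : ℝ))) :
    (C b * X 0 - C a * X 1) ^ 2 ∣ h ↔
      evalP (pderiv 0 h) a b = 0 ∧ evalP (pderiv 1 h) a b = 0 := by
  constructor
  · rintro ⟨k, rfl⟩
    constructor <;> simp [evalP, Derivation.leibniz, sq, mul_comm]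
  · rintro ⟨h0, h1⟩
    have e := euler h d hh a b
    rw [h0, h1] at e
    have hd' : (d : ℝ) ≠ 0 := by positivity
    have hz : evalP h a b = 0 := by
      have : (d : ℝ) * evalP h a b = 0 := by linarith
      simpa [hd'] using this
    obtain ⟨k, hk⟩ := dvd_of_root h d hh a b hab hz
    obtain ⟨n, rfl⟩ : ∃ n, d = 1 + n := ⟨d - 1, by omega⟩
    have hk2 : h = (C b * X 0 - C a * X 1) * homogeneousComponent n k := by
      rw [← homComp_mul _ _ (homog_l a b), ← hk, homogeneousComponent_eq_self hh]
    set k' := homogeneousComponent n k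
    have hk0 : evalP k' a b = 0 := by
      rw [hk2] at h0 h1
      simp [evalP, Derivation.leibniz, pderiv_X] at h0 h1
      have h0' : b = 0 ∨ evalP k' a b = 0 := by
        have : b * evalP k' a b = 0 := by
          unfold evalP; linear_combination h0
        simpa using this
      have h1' : a = 0 ∨ evalP k' a b = 0 := by
        have : a * evalP k' a b = 0 := by
          unfold evalP; linear_combination -h1
        simpa using this
      rcases h0' with h0' | h0'
      · rcases h1' with h1' | h1'
        · simp [h0', h1'] at hab
        · exact h1'
      · exact h0'
    rw [hk2, sq]
    exact mul_dvd_mul_left _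
      (dvd_of_root k' n (homogeneousComponent_isHomogeneous n k) a b hab hk0)

/-- gradient characterisation of condition (i) -/
def CondA (d : ℕ) (g : MvPolynomial (Fin 2) ℝ) : Prop :=
  ∀ x y : ℝ, (x, y) ≠ ((0 : ℝ), (0 : ℝ)) →
    ¬ (evalP (pderiv 0 (homogeneousComponent d g)) x y = 0 ∧
      evalP (pderiv 1 (homogeneousComponent d g)) x y = 0)

def CondB (g : MvPolynomial (Fin 2) ℝ) : Prop :=
  ∀ x y : ℝ, evalP (pderiv 0 g) x y = 0 → evalP (pderiv 1 g) x y = 0 →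
    evalP (pderiv 0 (pderiv 0 g)) x y * evalP (pderiv 1 (pderiv 1 g)) x y -
      (evalP (pderiv 1 (pderiv 0 g)) x y) ^ 2 ≠ 0

lemma morseGeneric_iff (d : ℕ) (hd : 1 ≤ d) (g : MvPolynomial (Fin 2) ℝ) :
    MorseGeneric d g ↔ CondA d g ∧ CondB g := by
  unfold MorseGeneric CondA CondB
  have hh := homogeneousComponent_isHomogeneous d g
  constructor
  · rintro ⟨_, h2, h3⟩
    exact ⟨fun x y hxy h => h2 x y hxy ((sq_dvd_iff d hd _ hh x y hxy).2 h), h3⟩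
  · rintro ⟨h2, h3⟩
    refine ⟨fun h0 => h2 1 0 (by simp) ?_, fun x y hxy h =>
      h2 x y hxy ((sq_dvd_iff d hd _ hh x y hxy).1 h), h3⟩
    simp [h0, evalP]

lemma hasFDerivAt_evalP (f : MvPolynomial (Fin 2) ℝ) (p : ℝ × ℝ) :
    HasFDerivAt (fun p : ℝ × ℝ => evalP f p.1 p.2)
      (evalP (pderiv 0 f) p.1 p.2 • ContinuousLinearMap.fst ℝ ℝ ℝ +
        evalP (pderiv 1 f) p.1 p.2 • ContinuousLinearMap.snd ℝ ℝ ℝ) p := by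
  induction f using MvPolynomial.induction_on with
  | C a => 
    simp only [evalP, eval_C, pderiv_C, map_zero, zero_smul, add_zero]
    exact hasFDerivAt_const _ _
  | add f g hf hg =>
    have := hf.add hg
    simp only [evalP, map_add] at this ⊢
    convert! this using 1
    ext <;> simp
  | mul_X f i hf =>
    fin_cases i
    · have := hf.mul (hasFDerivAt_fst (𝕜 := ℝ) (E := ℝ) (F := ℝ) (p := p))
      simp only [evalP, map_mul, eval_X, Derivation.leibniz] at this ⊢
      convert! this using 1
      ext <;> simp [pderiv_X]
    · have := hf.mul (hasFDerivAt_snd (𝕜 := ℝ) (E := ℝ) (F := ℝ) (p := p))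
      simp only [evalP, map_mul, eval_X, Derivation.leibniz] at this ⊢
      convert! this using 1
      ext <;> simp [pderiv_X]

@[fun_prop]
lemma continuous_evalP (f : MvPolynomial (Fin 2) ℝ) :
    Continuous (fun p : ℝ × ℝ => evalP f p.1 p.2) :=
  continuous_iff_continuousAt.2 fun p => (hasFDerivAt_evalP f p).continuousAt

lemma evalP_scale (f : MvPolynomial (Fin 2) ℝ) (n : ℕ) (hf : f.IsHomogeneous n) (t x y : ℝ) :
    evalP f (t * x) (t * y) = t ^ n * evalP f x y := by
  have e : ∀ x y, evalP f x y = ∑ m ∈ f.support, evalP (monomial m (coeff m f)) x y := by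
    intro x y
    conv_lhs => rw [f.as_sum]
    simp only [evalP, map_sum]
  rw [e, e, Finset.mul_sum]
  refine Finset.sum_congr rfl fun m hm => ?_
  have h1 : m 0 + m 1 = n := by
    rw [← hf (mem_support_iff.1 hm)]
    simp [Finsupp.weight_apply, Finsupp.sum_fintype, Fin.sum_univ_two]
  rw [mono_fin2, ← h1]
  simp [evalP]
  ring

lemma pderiv_swap (f : MvPolynomial (Fin 2) ℝ) :
    pderiv 0 (pderiv 1 f) = pderiv 1 (pderiv 0 f) := by
  induction f using MvPolynomial.induction_on with
  | C a => simp
  | add f g hf hg => simp [hf, hg]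
  | mul_X f i hf =>
    fin_cases i <;> simp [Derivation.leibniz, pderiv_X, hf, add_comm]

abbrev Idx (d : ℕ) := {q : ℕ × ℕ // q.1 + q.2 ≤ d}

noncomputable instance instFintypeIdx (d : ℕ) : Fintype {q : ℕ × ℕ // q.1 + q.2 ≤ d} :=
  Set.Finite.fintype (s := {q : ℕ × ℕ | q.1 + q.2 ≤ d})
    ((Set.finite_Iic (d, d)).subset fun q hq => by
      simp only [Set.mem_ofPred_eq] at hq
      exact Prod.mk_le_mk.2 ⟨by omega, by omega⟩)

/-- monomial -/
noncomputable def mon {d : ℕ} (q : Idx d) : MvPolynomial (Fin 2) ℝ := X 0 ^ q.1.1 * X 1 ^ q.1.2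

lemma mon_homog {d : ℕ} (q : Idx d) : (mon q).IsHomogeneous (q.1.1 + q.1.2) := 
  (isHomogeneous_X_pow 0 _).mul (isHomogeneous_X_pow 1 _)

lemma polyOf_eq (d : ℕ) (v : Idx d → ℝ) : polyOf d v = ∑ q, v q • mon q := by
  unfold polyOf mon
  rw [finsum_eq_sum_of_fintype]
  simp [smul_eq_C_mul, mul_assoc]

lemma polyOf_add (d : ℕ) (v w : Idx d → ℝ) : polyOf d (v + w) = polyOf d v + polyOf d w := by
  simp [polyOf_eq, add_smul, Finset.sum_add_distrib]

lemma polyOf_single (d : ℕ) (q : Idx d) (c : ℝ) : polyOf d (Pi.single q c) = c • mon q := by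
  rw [polyOf_eq, Finset.sum_eq_single q]
  · simp
  · intro b _ hb; simp [hb]
  · simp

lemma evalP_sum (d : ℕ) (v : Idx d → ℝ) (L : MvPolynomial (Fin 2) ℝ →ₗ[ℝ] MvPolynomial (Fin 2) ℝ)
    (x y : ℝ) : evalP (L (polyOf d v)) x y = ∑ q, v q * evalP (L (mon q)) x y := by
  rw [polyOf_eq]
  simp [evalP, map_sum, smul_eval]

lemma continuous_evalP_L (d : ℕ) (L : MvPolynomial (Fin 2) ℝ →ₗ[ℝ] MvPolynomial (Fin 2) ℝ) :
    Continuous fun p : (Idx d → ℝ) × (ℝ × ℝ) => evalP (L (polyOf d p.1)) p.2.1 p.2.2 := by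
  simp only [evalP_sum]
  refine continuous_finsetSum _ fun q _ => ?_
  exact ((continuous_apply q).comp continuous_fst).mul ((continuous_evalP _).comp continuous_snd)

/-- homogenised partial derivatives -/
noncomputable def PP (d : ℕ) (i : Fin 2) (v : Idx d → ℝ) (x y z : ℝ) : ℝ :=
  ∑ q : Idx d, v q * (z ^ (d - (q.1.1 + q.1.2)) * evalP (pderiv i (mon q)) x y)

lemma continuous_PP (d : ℕ) (i : Fin 2) :
    Continuous fun p : (Idx d → ℝ) × (ℝ × ℝ × ℝ) => PP d i p.1 p.2.1 p.2.2.1 p.2.2.2 := by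
  unfold PP
  refine continuous_finsetSum _ fun q _ => ?_
  have h1 : Continuous fun p : (Idx d → ℝ) × (ℝ × ℝ × ℝ) =>
      evalP (pderiv i (mon q)) p.2.1 p.2.2.1 :=
    (continuous_evalP (pderiv i (mon q))).comp
      (g := fun p : ℝ × ℝ => evalP (pderiv i (mon q)) p.1 p.2)
      (f := fun p : (Idx d → ℝ) × (ℝ × ℝ × ℝ) => (p.2.1, p.2.2.1)) (by fun_prop)
  exact ((continuous_apply q).comp continuous_fst).mul (((by fun_prop : Continuous fun 
    p : (Idx d → ℝ) × (ℝ × ℝ × ℝ) => p.2.2.2).pow _).mul h1)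

lemma PP_scale (d : ℕ) (i : Fin 2) (v : Idx d → ℝ) (t x y z : ℝ) :
    PP d i v (t * x) (t * y) (t * z) = t ^ (d - 1) * PP d i v x y z := by
  unfold PP
  rw [Finset.mul_sum]
  refine Finset.sum_congr rfl fun q _ => ?_
  rw [evalP_scale _ _ (mon_homog q).pderiv]
  by_cases h : q.1.1 + q.1.2 = 0
  · have : mon q = 1 := by
      unfold mon
      rw [show q.1.1 = 0 by omega, show q.1.2 = 0 by omega]; simp
    simp [this, evalP]
  · have hq := q.2
    rw [show d - 1 = (d - (q.1.1 + q.1.2)) + (q.1.1 + q.1.2 - 1) by omega, pow_add]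
    ring

lemma PP_one (d : ℕ) (i : Fin 2) (v : Idx d → ℝ) (x y : ℝ) :
    PP d i v x y 1 = evalP (pderiv i (polyOf d v)) x y := by
  have := evalP_sum d v (pderiv i).toLinearMap x y
  simp only [Derivation.coeFn_coe] at this
  rw [this]
  simp [PP]

lemma PP_zero (d : ℕ) (i : Fin 2) (v : Idx d → ℝ) (x y : ℝ) :
    PP d i v x y 0 = evalP (pderiv i (homogeneousComponent d (polyOf d v))) x y := by
  have := evalP_sum d v ((pderiv i).toLinearMap ∘ₗ homogeneousComponent d) x y
  simp only [LinearMap.comp_apply, Derivation.coeFn_coe] at this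
  rw [this]
  unfold PP
  refine Finset.sum_congr rfl fun q _ => ?_
  rw [homogeneousComponent_of_mem (mon_homog q)]
  have hq := q.2
  by_cases h : q.1.1 + q.1.2 = d
  · simp [h]
  · rw [if_neg (Ne.symm h), zero_pow (by omega)]
    simp [evalP]

lemma isOpen_forall_compact {V Y : Type*} [TopologicalSpace V] [TopologicalSpace Y]
    {K : Set Y} (hK : IsCompact K) {W : Set (V × Y)} (hW : IsOpen W) :
    IsOpen {v : V | ∀ y ∈ K, (v, y) ∈ W} := by
  rw [isOpen_iff_eventually]
  intro v hv
  exact hK.eventually_forall_of_forall_eventually (P := fun v y => (v, y) ∈ W)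
    fun y hy => hW.eventually_mem (hv y hy)

lemma condA_iff (d : ℕ) (v : Idx d → ℝ) : CondA d (polyOf d v) ↔
    ∀ p ∈ Metric.sphere (0 : ℝ × ℝ) 1, (v, p) ∈ {w : (Idx d → ℝ) × (ℝ × ℝ) |
      PP d 0 w.1 w.2.1 w.2.2 0 ≠ 0 ∨ PP d 1 w.1 w.2.1 w.2.2 0 ≠ 0} := by
  unfold CondA
  simp only [← PP_zero, Set.mem_ofPred_eq]
  constructor
  · intro h p hp
    have := h p.1 p.2 (by
      rintro h0
      have : p = 0 := h0
      simp [this] at hp)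
    tauto
  · rintro h x y hxy ⟨h0, h1⟩
    have hn : ‖(x, y)‖ ≠ 0 := norm_ne_zero_iff.2 hxy
    have := h (‖(x, y)‖⁻¹ • (x, y)) (by
        rw [mem_sphere_zero_iff_norm, norm_smul, norm_inv, norm_norm, inv_mul_cancel₀ hn])
    have s := fun i => PP_scale d i v (‖(x, y)‖⁻¹) x y 0
    simp only [mul_zero] at s
    simp only [Prod.smul_fst, Prod.smul_snd, smul_eq_mul, s, h0, h1] at this
    simp at this

lemma isOpen_condA (d : ℕ) : IsOpen {v : Idx d → ℝ | CondA d (polyOf d v)} := by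
  simp only [condA_iff]
  refine isOpen_forall_compact (isCompact_sphere _ _) ?_
  have c : ∀ i, Continuous fun w : (Idx d → ℝ) × (ℝ × ℝ) => PP d i w.1 w.2.1 w.2.2 0 := fun i =>
    (continuous_PP d i).comp (g := fun p : (Idx d → ℝ) × (ℝ × ℝ × ℝ) => 
      PP d i p.1 p.2.1 p.2.2.1 p.2.2.2)
      (f := fun w : (Idx d → ℝ) × (ℝ × ℝ) => (w.1, w.2.1, w.2.2, (0 : ℝ))) (by fun_prop)
  exact (isOpen_ne_fun (c 0) continuous_const).union (isOpen_ne_fun (c 1) continuous_const)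

/-- Hessian determinant -/
noncomputable def Hs (d : ℕ) (v : Idx d → ℝ) (x y : ℝ) : ℝ :=
  evalP (pderiv 0 (pderiv 0 (polyOf d v))) x y * evalP (pderiv 1 (pderiv 1 (polyOf d v))) x y -
      (evalP (pderiv 1 (pderiv 0 (polyOf d v))) x y) ^ 2

lemma continuous_Hs (d : ℕ) :
    Continuous fun p : (Idx d → ℝ) × (ℝ × ℝ) => Hs d p.1 p.2.1 p.2.2 := by
  have c : ∀ i j : Fin 2, Continuous fun p : (Idx d → ℝ) × (ℝ × ℝ) =>
      evalP (pderiv i (pderiv j (polyOf d p.1))) p.2.1 p.2.2 := fun i j =>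
    continuous_evalP_L d ((pderiv i).toLinearMap ∘ₗ (pderiv j).toLinearMap)
  unfold Hs
  exact ((c 0 0).mul (c 1 1)).sub ((c 1 0).pow 2)

lemma condAB_iff (d : ℕ) (v : Idx d → ℝ) : (CondA d (polyOf d v) ∧ CondB (polyOf d v)) ↔
    ∀ p ∈ Metric.sphere (0 : ℝ × ℝ × ℝ) 1, (v, p) ∈ 
      {w : (Idx d → ℝ) × (ℝ × ℝ × ℝ) | PP d 0 w.1 w.2.1 w.2.2.1 w.2.2.2 ≠ 0} ∪ 
      {w : (Idx d → ℝ) × (ℝ × ℝ × ℝ) | PP d 1 w.1 w.2.1 w.2.2.1 w.2.2.2 ≠ 0} ∪ 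
      {w : (Idx d → ℝ) × (ℝ × ℝ × ℝ) | w.2.2.2 ≠ 0 ∧ 
        Hs d w.1 (w.2.1 / w.2.2.2) (w.2.2.1 / w.2.2.2) ≠ 0} := by
  constructor
  · rintro ⟨hA, hB⟩ ⟨x, y, z⟩ hp
    simp only [Set.mem_union, Set.mem_ofPred_eq]
    by_cases hz : z = 0
    · subst hz
      have := hA x y (by
        rintro h0
        simp only [Prod.mk.injEq] at h0
        simp [h0] at hp)
      simp only [← PP_zero] at this
      tauto
    · have s := fun i => PP_scale d i v z (x / z) (y / z) 1
      simp only [mul_div_cancel₀ _ hz, mul_one, PP_one] at s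
      rw [s, s]
      have hz' : z ^ (d - 1) ≠ 0 := pow_ne_zero _ hz
      have := hB (x / z) (y / z)
      by_contra! hc
      simp only [mul_eq_zero, hz', false_or] at hc
      exact this hc.1.1 hc.1.2 (hc.2 hz)
  · intro h
    have key : ∀ x y z : ℝ, (x, y, z) ≠ 0 → PP d 0 v x y z = 0 → PP d 1 v x y z = 0 → 
        z ≠ 0 ∧ Hs d v (x / z) (y / z) ≠ 0 := by
      intro x y z hne h0 h1
      have hn : ‖(x, y, z)‖ ≠ 0 := norm_ne_zero_iff.2 hne
      have := h (‖(x, y, z)‖⁻¹ • (x, y, z)) (by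
        rw [mem_sphere_zero_iff_norm, norm_smul, norm_inv, norm_norm, inv_mul_cancel₀ hn])
      simp only [Prod.smul_fst, Prod.smul_snd, smul_eq_mul, PP_scale, h0, h1, Set.mem_union,
        Set.mem_ofPred_eq, mul_zero, ne_eq, not_true_eq_false, false_or, mul_eq_zero, inv_eq_zero,
        hn] at this
      rwa [mul_div_mul_left _ _ (inv_ne_zero hn), mul_div_mul_left _ _ (inv_ne_zero hn)] at this
    constructor
    · rintro x y hxy ⟨h0, h1⟩
      rw [← PP_zero] at h0 h1
      refine (key x y 0 ?_ h0 h1).1 rfl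
      intro h; apply hxy; simpa using h
    · intro x y h0 h1
      rw [← PP_one] at h0 h1
      have := (key x y 1 (by simp) h0 h1).2
      simpa [Hs] using this

lemma isOpen_condAB (d : ℕ) :
    IsOpen {v : Idx d → ℝ | CondA d (polyOf d v) ∧ CondB (polyOf d v)} := by
  simp only [condAB_iff]
  refine isOpen_forall_compact (isCompact_sphere _ _) ?_
  refine ((isOpen_ne_fun (continuous_PP d 0) continuous_const).union 
    (isOpen_ne_fun (continuous_PP d 1) continuous_const)).union ?_
  have ho : IsOpen {w : (Idx d → ℝ) × (ℝ × ℝ × ℝ) | w.2.2.2 ≠ 0} :=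
    isOpen_ne_fun (by fun_prop) continuous_const
  have hc : ContinuousOn (fun w : (Idx d → ℝ) × (ℝ × ℝ × ℝ) => 
      Hs d w.1 (w.2.1 / w.2.2.2) (w.2.2.1 / w.2.2.2)) {w | w.2.2.2 ≠ 0} := by
    refine (continuous_Hs d).comp_continuousOn 
      (g := fun p : (Idx d → ℝ) × (ℝ × ℝ) => Hs d p.1 p.2.1 p.2.2)
      (f := fun w : (Idx d → ℝ) × (ℝ × ℝ × ℝ) => (w.1, w.2.1 / w.2.2.2, w.2.2.1 / w.2.2.2)) ?_
    refine ContinuousOn.prodMk (by fun_prop) (ContinuousOn.prodMk ?_ ?_)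
    · exact ContinuousOn.div (by fun_prop) (by fun_prop) (fun w hw => hw)
    · exact ContinuousOn.div (by fun_prop) (by fun_prop) (fun w hw => hw)
  exact hc.isOpen_inter_preimage ho isOpen_ne

lemma dense_of_null {V E : Type*} [TopologicalSpace V] [AddCommGroup V] [ContinuousAdd V]
    [TopologicalSpace E] [Zero E] [MeasurableSpace E] (μ : Measure E) [μ.IsOpenPosMeasure]
    (S : Set V) (L : E → V) (hL : Continuous L) (hL0 : L 0 = 0)
    (h : ∀ v, μ {e | v + L e ∉ S} = 0) : Dense S := by
  intro v
  rw [mem_closure_iff_nhds]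
  intro U hU
  have hc : Continuous fun e => v + L e := continuous_const.add hL
  have h0 : (fun e => v + L e) ⁻¹' U ∈ nhds (0 : E) := by
    apply hc.continuousAt.preimage_mem_nhds
    simpa [hL0] using hU
  by_contra hne
  have hsub : (fun e => v + L e) ⁻¹' U ⊆ {e | v + L e ∉ S} := fun e he hS => hne ⟨_, he, hS⟩
  exact (Measure.measure_pos_of_mem_nhds μ h0).ne' (measure_mono_null hsub (h v))

lemma dense_condB (d : ℕ) (hd : 1 ≤ d) : Dense {v : Idx d → ℝ | CondB (polyOf d v)} := by
  let q0 : Idx d := ⟨(1, 0), by simpa using hd⟩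
  let q1 : Idx d := ⟨(0, 1), by simpa using hd⟩
  let L : ℝ × ℝ → (Idx d → ℝ) := fun e => Pi.single q0 e.1 + Pi.single q1 e.2
  refine dense_of_null (volume : Measure (ℝ × ℝ)) _ L ?_ (by simp [L]) ?_
  · exact ((continuous_single (A := fun _ : Idx d => ℝ) q0).comp continuous_fst).add
      ((continuous_single (A := fun _ : Idx d => ℝ) q1).comp continuous_snd)
  intro v
  let g := polyOf d v
  have hg : ∀ e : ℝ × ℝ, polyOf d (v + L e) = g + (e.1 • X 0 + e.2 • X 1) := by
    intro e
    simp [L, polyOf_add, polyOf_single, mon, q0, q1, g]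
  let D : ℝ × ℝ → (ℝ × ℝ →L[ℝ] ℝ × ℝ) := fun p =>
    (Matrix.toLin (.finTwoProd ℝ) (.finTwoProd ℝ)
    !![-evalP (pderiv 0 (pderiv 0 g)) p.1 p.2, -evalP (pderiv 1 (pderiv 0 g)) p.1 p.2;
      -evalP (pderiv 0 (pderiv 1 g)) p.1 p.2,
      -evalP (pderiv 1 (pderiv 1 g)) p.1 p.2]).toContinuousLinearMap
  let F : ℝ × ℝ → ℝ × ℝ := fun p => (-evalP (pderiv 0 g) p.1 p.2, -evalP (pderiv 1 g) p.1 p.2)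
  have hF : ∀ p, HasFDerivAt F (D p) p := by
    intro p
    have := (hasFDerivAt_evalP (pderiv 0 g) p).neg.prodMk (hasFDerivAt_evalP (pderiv 1 g) p).neg
    convert! this using 1
    simp only [D]
    rw [Matrix.toLin_finTwoProd_toContinuousLinearMap]
    ext <;> simp
  have hdet : ∀ p, (D p).det = evalP (pderiv 0 (pderiv 0 g)) p.1 p.2 *
      evalP (pderiv 1 (pderiv 1 g)) p.1 p.2 - (evalP (pderiv 1 (pderiv 0 g)) p.1 p.2) ^ 2 := by
    intro p
    simp only [D, LinearMap.det_toContinuousLinearMap, LinearMap.det_toLin,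
      Matrix.det_fin_two_of, pderiv_swap]
    ring
  have null : volume (F '' {p | (D p).det = 0}) = 0 :=
    addHaar_image_eq_zero_of_det_fderivWithin_eq_zero volume
      (fun p _ => (hF p).hasFDerivWithinAt) (fun p hp => hp)
  refine measure_mono_null ?_ null
  intro e he
  simp only [Set.mem_ofPred_eq, CondB, hg] at he
  push Not at he
  obtain ⟨x, y, h0, h1, h2⟩ := he
  refine ⟨(x, y), ?_, ?_⟩
  · simp only [Set.mem_ofPred_eq, hdet]
    rw [← h2]
    simp [evalP, pderiv_X, Derivation.map_smul]
  · simp [evalP, pderiv_X, Derivation.map_smul, smul_eval] at h0 h1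
    ext
    · simp only [F, evalP]; linarith
    · simp only [F, evalP]; linarith

lemma dense_condA (d : ℕ) (hd : 1 ≤ d) : Dense {v : Idx d → ℝ | CondA d (polyOf d v)} := by
  let S1 : Set (Idx d → ℝ) := {v | evalP (homogeneousComponent d (polyOf d v)) 0 1 ≠ 0}
  let T : Set (Idx d → ℝ) := {v | v ∈ S1 → CondA d (polyOf d v)}
  let q0 : Idx d := ⟨(d, 0), by simp⟩
  let q1 : Idx d := ⟨(0, d), by simp⟩
  have hd0 : d ≠ 0 := by omega
  have hS1o : IsOpen S1 := by
    refine isOpen_ne_fun ?_ continuous_const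
    exact (continuous_evalP_L d (homogeneousComponent d)).comp
      (g := fun p : (Idx d → ℝ) × (ℝ × ℝ) =>
        evalP (homogeneousComponent d (polyOf d p.1)) p.2.1 p.2.2)
      (f := fun v => (v, ((0 : ℝ), (1 : ℝ)))) (by fun_prop)
  have h0 : ∀ v s, homogeneousComponent d (polyOf d (v + Pi.single q0 s)) =
      homogeneousComponent d (polyOf d v) + s • X 0 ^ d := by
    intro v s
    have : homogeneousComponent d (mon q0) = mon q0 :=
      homogeneousComponent_eq_self (mon_homog q0)
    rw [polyOf_add, polyOf_single, map_add, map_smul, this]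
    simp [mon, q0]
  have h1 : ∀ v s, homogeneousComponent d (polyOf d (v + Pi.single q1 s)) =
      homogeneousComponent d (polyOf d v) + s • X 1 ^ d := by
    intro v s
    have : homogeneousComponent d (mon q1) = mon q1 :=
      homogeneousComponent_eq_self (by simpa [q1] using mon_homog q1)
    rw [polyOf_add, polyOf_single, map_add, map_smul, this]
    simp [mon, q1]
  have hS1d : Dense S1 := by
    refine dense_of_null (volume : Measure ℝ) _ (fun s => Pi.single q1 s)
      (continuous_single (A := fun _ : Idx d => ℝ) q1) (by simp) ?_
    intro v
    refine measure_mono_null (t := {-evalP (homogeneousComponent d (polyOf d v)) 0 1}) ?_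
      (by simp)
    intro s hs
    simp only [S1, Set.mem_ofPred_eq, h1, not_not] at hs
    simp only [evalP, map_add, smul_eval, map_pow, eval_X] at hs
    simp at hs
    simp only [Set.mem_singleton_iff, evalP]
    linarith
  have hT : Dense T := by
    refine dense_of_null (volume : Measure ℝ) _ (fun s => Pi.single q0 s)
      (continuous_single (A := fun _ : Idx d => ℝ) q0) (by simp) ?_
    intro v
    set h := homogeneousComponent d (polyOf d v) with hh
    have hhom : h.IsHomogeneous d := homogeneousComponent_isHomogeneous _ _
    let f : ℝ → ℝ := fun m => -evalP h 1 m
    let f' : ℝ → (ℝ →L[ℝ] ℝ) := fun m => (-evalP (pderiv 1 h) 1 m) • ContinuousLinearMap.id ℝ ℝ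
    have hf : ∀ m, HasFDerivAt f (f' m) m := by
      intro m
      have a := (hasFDerivAt_evalP h (1, m)).comp m
        ((hasFDerivAt_const (1 : ℝ) m).prodMk (hasFDerivAt_id m))
      have := a.neg
      convert! this using 1
      ext; simp [f']
    have hdet : ∀ m, evalP (pderiv 1 h) 1 m = 0 → (f' m).det = 0 := by
      intro m hm
      simp [f', hm, ContinuousLinearMap.det]
    have null : volume (f '' {m | evalP (pderiv 1 h) 1 m = 0}) = 0 :=
      addHaar_image_eq_zero_of_det_fderivWithin_eq_zero volume
        (fun p _ => (hf p).hasFDerivWithinAt) (fun p hp => hdet p hp)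
    refine measure_mono_null ?_ null
    intro s hs
    simp only [T, S1, CondA, Set.mem_ofPred_eq, h0, ← hh] at hs
    have hhom' : (h + s • X 0 ^ d).IsHomogeneous d := by
      rw [hh, ← h0]; exact homogeneousComponent_isHomogeneous _ _
    set k := h + s • X 0 ^ d with hk
    push Not at hs
    obtain ⟨hk1, x, y, hxy, e0, e1⟩ := hs
    have hdR : (d : ℝ) ≠ 0 := by exact_mod_cast hd0
    have hz : evalP k x y = 0 := by
      have := euler k d hhom' x y
      rw [e0, e1] at this
      have : (d : ℝ) * evalP k x y = 0 := by linarith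
      simpa [hdR] using this
    have hx : x ≠ 0 := by
      rintro rfl
      have := evalP_scale k d hhom' y 0 1
      rw [mul_zero, mul_one, hz] at this
      have : y = 0 := by
        have := this.symm
        rw [mul_eq_zero] at this
        exact pow_eq_zero_iff hd0 |>.1 (this.resolve_right hk1)
      simp [this] at hxy
    have hxp : ∀ n, x ^ n ≠ 0 := fun n => pow_ne_zero n hx
    have z2 : evalP k 1 (y / x) = 0 := by
      have := evalP_scale k d hhom' x 1 (y / x)
      rw [mul_one, mul_div_cancel₀ _ hx, hz] at this
      simpa [hxp, hx] using this.symm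
    have z3 : evalP (pderiv 1 k) 1 (y / x) = 0 := by
      have := evalP_scale (pderiv 1 k) (d - 1) hhom'.pderiv x 1 (y / x)
      rw [mul_one, mul_div_cancel₀ _ hx, e1] at this
      have := this.symm
      rw [mul_eq_zero] at this
      exact this.resolve_left (hxp _)
    refine ⟨y / x, ?_, ?_⟩
    · simp only [Set.mem_ofPred_eq]
      rw [← z3, hk]
      simp [evalP, Derivation.map_smul, Derivation.leibniz_pow, pderiv_X]
    · rw [hk] at z2
      simp [evalP, smul_eval] at z2
      simp only [f, evalP]
      linarith
  refine (hT.inter_of_isOpen_right hS1d hS1o).mono ?_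
  rintro v ⟨a, b⟩
  exact a b

theorem morseGeneric_isOpen_dense (d : ℕ) (hd : 1 ≤ d) :
    IsOpen {v : {q : ℕ × ℕ // q.1 + q.2 ≤ d} → ℝ | MorseGeneric d (polyOf d v)} ∧
    Dense {v : {q : ℕ × ℕ // q.1 + q.2 ≤ d} → ℝ | MorseGeneric d (polyOf d v)} := by
  simp only [morseGeneric_iff d hd]
  exact ⟨isOpen_condAB d, (dense_condA d hd).inter_of_isOpen_left (dense_condB d hd)
    (isOpen_condA d)⟩
end
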